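/- Let α and α' be smoothly embedded arcs in the 3-sphere S³ having the same pair of distinct endpoints and disjoint interiors, and suppose the circle α ∪ α' is unknotted, i.e., it is the boundary of a smoothly embedded disc in S³. Then there is a smooth ambient isotopy of S³ that fixes the two endpoints throughout and sends α to α'. -/

import Mathlib

open Metric Manifold Set

noncomputable section

/-- The 3-sphere: the unit sphere in `EuclideanSpace ℝ (Fin 4)`. -/
abbrev S3 : Type := Metric.sphere (0 : EuclideanSpace ℝ (Fin 4)) 1

/-- A smooth ambient isotopy of the 3-sphere: a smooth map
`h : [0,1] × S³ → S³` with `h 0 = id` and `h λ` a diffeomorphism for every `λ`. -/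
structure AmbientIsotopy where
  toFun : Set.Icc (0:ℝ) 1 → S3 → S3
  smooth : ContMDiff ((𝓡∂ 1).prod (𝓡 3)) (𝓡 3) (⊤ : ℕ∞)
    (fun p : Set.Icc (0:ℝ) 1 × S3 => toFun p.1 p.2)
  init : ∀ x, toFun 0 x = x
  diffeo : ∀ lam, ∃ d : Diffeomorph (𝓡 3) (𝓡 3) S3 S3 (⊤ : ℕ∞), ∀ x, toFun lam x = d x

/-- The ambient isotopy `h` sends the subset `X` of `S³` to the subset `Y`. -/
def AmbientIsotopy.Sends (h : AmbientIsotopy) (X Y : Set S3) : Prop :=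
  h.toFun 1 '' X = Y

/-- A smoothly embedded disc in `S³`: a smooth injective immersion of the closed unit
disc `D² ⊆ ℝ²` which is a topological embedding. -/
structure EmbeddedDisc where
  emb : EuclideanSpace ℝ (Fin 2) → S3
  smooth : ContMDiff 𝓘(ℝ, EuclideanSpace ℝ (Fin 2)) (𝓡 3) (⊤ : ℕ∞) emb
  immersion : ∀ p ∈ Metric.closedBall (0 : EuclideanSpace ℝ (Fin 2)) 1,
    Function.Injective (mfderiv 𝓘(ℝ, EuclideanSpace ℝ (Fin 2)) (𝓡 3) emb p)
  isEmbedding : Topology.IsEmbedding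
    ((Metric.closedBall (0 : EuclideanSpace ℝ (Fin 2)) 1).restrict emb)

/-- The embedded disc as a subset of `S³`. -/
def EmbeddedDisc.carrier (D : EmbeddedDisc) : Set S3 :=
  D.emb '' Metric.closedBall 0 1

/-- The boundary circle of an embedded disc: the image of the unit circle `∂D²`. -/
def EmbeddedDisc.bdry (D : EmbeddedDisc) : Set S3 :=
  D.emb '' Metric.sphere 0 1
/-- A smoothly embedded arc in `S³`: a smooth embedding of the interval `[0,1]`
(a smooth injective immersion on `[0,1]`; by compactness it is automatically a
topological embedding of `[0,1]`). -/
structure EmbeddedArc where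
  emb : ℝ → S3
  smooth : ContMDiff 𝓘(ℝ) (𝓡 3) (⊤ : ℕ∞) emb
  immersion : ∀ t ∈ Set.Icc (0:ℝ) 1,
    Function.Injective (mfderiv 𝓘(ℝ) (𝓡 3) emb t)
  inj : Set.InjOn emb (Set.Icc 0 1)

/-- The embedded arc as a subset of `S³`. -/
def EmbeddedArc.carrier (a : EmbeddedArc) : Set S3 :=
  a.emb '' Set.Icc 0 1

/-- The interior of an embedded arc: the image of the open interval `(0,1)`. -/
def EmbeddedArc.interior (a : EmbeddedArc) : Set S3 :=
  a.emb '' Set.Ioo 0 1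

/-!
Thicken the disc to a chart of `ℝ⁴` adapted to the concentric spheres: the exponential map of its
unit normal field inside `S³`, together with the radial direction. After a Möbius
reparametrisation of the disc the two endpoints lie at `±i`, so the half-turn about the axis
through `i` and `-i` in the chart swaps the two half-circles, which are the two arcs. The axis plane
contains the radial coordinate, so rotating about it preserves the norm. Damping the angular speed
to zero away from the disc makes the rotation a compactly supported flow of the chart; extended by
the identity it is a smooth norm-preserving flow of `ℝ⁴` fixing the endpoints, and its restriction
to `S³` is the isotopy.
-/

open Filter Topology Function
open scoped ContDiff ComplexConjugate

section CrossProduct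

variable {n : ℕ}

/-- The cross product of `n` vectors of `ℝⁿ⁺¹`: the vector representing the linear form
`x ↦ det (x, v₀, …, vₙ₋₁)`, given by its coordinates. -/
def euclideanCross (v : Fin n → EuclideanSpace ℝ (Fin (n + 1))) : EuclideanSpace ℝ (Fin (n + 1)) :=
  WithLp.toLp 2 fun i => (-1) ^ (i : ℕ) * (Matrix.of fun k l => v k (i.succAbove l)).det

lemma inner_euclideanCross (v : Fin n → EuclideanSpace ℝ (Fin (n + 1)))
    (x : EuclideanSpace ℝ (Fin (n + 1))) :
    inner ℝ (euclideanCross v) x =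
      (Matrix.of fun k => WithLp.ofLp ((Fin.cons x v : Fin (n + 1) → _) k)).det := by
  rw [Matrix.det_succ_row_zero, PiLp.inner_apply]
  refine Finset.sum_congr rfl fun i _ => ?_
  simp only [euclideanCross, RCLike.inner_apply, conj_trivial, Matrix.of_apply, Fin.cons_zero]
  rw [show (Matrix.of fun k => WithLp.ofLp ((Fin.cons x v : Fin (n + 1) → _) k)).submatrix
    Fin.succ i.succAbove = Matrix.of fun k l => v k (i.succAbove l) from rfl]
  ring

lemma inner_euclideanCross_self (v : Fin n → EuclideanSpace ℝ (Fin (n + 1))) (k : Fin n) :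
    inner ℝ (euclideanCross v) (v k) = 0 := by
  rw [inner_euclideanCross]
  exact Matrix.det_zero_of_row_eq (Fin.succ_ne_zero k).symm (by ext; simp)

lemma euclideanCross_ne_zero {v : Fin n → EuclideanSpace ℝ (Fin (n + 1))}
    (hv : LinearIndependent ℝ v) : euclideanCross v ≠ 0 := by
  obtain ⟨x, hx⟩ : ∃ x, x ∉ Submodule.span ℝ (range v) := by
    by_contra! hspan
    have hfinrank := finrank_span_eq_card hv
    rw [Submodule.eq_top_iff'.2 hspan, finrank_top] at hfinrank
    simp at hfinrank
  have hrows : LinearIndependent ℝ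
      (Matrix.of fun k => WithLp.ofLp ((Fin.cons x v : Fin (n + 1) → _) k)).row :=
    (linearIndependent_finCons.2 ⟨hv, hx⟩).map'
      (WithLp.linearEquiv 2 ℝ (Fin (n + 1) → ℝ)).toLinearMap (LinearEquiv.ker _)
  rw [Matrix.linearIndependent_rows_iff_isUnit, Matrix.isUnit_iff_isUnit_det,
    ← inner_euclideanCross] at hrows
  intro hzero
  exact hrows.ne_zero (by rw [hzero, inner_zero_left])

lemma contDiffOn_euclideanCross {V : Type*} [NormedAddCommGroup V] [NormedSpace ℝ V]
    {r : WithTop ℕ∞} {s : Set V} {v : V → Fin n → EuclideanSpace ℝ (Fin (n + 1))}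
    (hv : ∀ k, ContDiffOn ℝ r (fun x => v x k) s) :
    ContDiffOn ℝ r (fun x => euclideanCross (v x)) s := by
  have hcoord : ∀ k l, ContDiffOn ℝ r (fun x => v x k l) s := fun k => contDiffOn_euclidean.1 (hv k)
  refine contDiffOn_euclidean.2 fun i => contDiffOn_const.mul ?_
  simp only [Matrix.det_apply, Matrix.of_apply]
  refine ContDiffOn.sum fun σ _ => ?_
  simp only [Units.smul_def, zsmul_eq_mul]
  exact contDiffOn_const.mul (contDiffOn_prod fun k _ => hcoord _ _)

end CrossProduct

section SmoothEmbeddingOn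

variable {V W X : Type*} [NormedAddCommGroup V] [NormedSpace ℝ V]
  [NormedAddCommGroup W] [NormedSpace ℝ W] [NormedAddCommGroup X] [NormedSpace ℝ X]

lemma exists_openPartialHomeomorph_of_injOn [CompleteSpace V] {f : V → W} {O : Set V}
    (hO : IsOpen O) (hf : ContDiffOn ℝ ∞ f O) (hinj : InjOn f O)
    (hequiv : ∀ x ∈ O, fderiv ℝ f x ∈ range ((↑) : (V ≃L[ℝ] W) → V →L[ℝ] W)) :
    ∃ Φ : OpenPartialHomeomorph V W, ⇑Φ = f ∧ Φ.source = O ∧ ContDiffOn ℝ ∞ Φ.symm Φ.target := by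
  have hat : ∀ x ∈ O, ContDiffAt ℝ ∞ f x := fun x hx => hf.contDiffAt (hO.mem_nhds hx)
  have hopen : IsOpenMap (O.domRestrict f) := by
    rw [isOpenMap_iff_nhds_le]
    rintro ⟨x, hx⟩
    obtain ⟨L, hL⟩ := hequiv x hx
    have hstrict := (hat x hx).hasStrictFDerivAt (by simp)
    rw [← hL] at hstrict
    rw [domRestrict_eq, ← Filter.map_map, map_nhds_subtype_coe_eq_nhds hx (hO.mem_nhds hx),
      hstrict.map_nhds_eq_of_equiv, comp_apply]
  let Φ := OpenPartialHomeomorph.ofContinuousOpenRestrict (hinj.toPartialEquiv f O) hf.continuousOn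
    hopen hO
  refine ⟨Φ, rfl, rfl, fun y hy => ?_⟩
  have hx : Φ.symm y ∈ O := Φ.map_target hy
  obtain ⟨L, hL⟩ := hequiv _ hx
  refine (Φ.contDiffAt_symm hy (f₀' := L) ?_ (hat _ hx)).contDiffWithinAt
  rw [hL]
  exact ((hat _ hx).differentiableAt (by simp)).hasFDerivAt

/-- `f` restricts to a smooth injective immersion of `K`. Smoothness is required on an open
neighbourhood of `K`, as is customary for sets `K` with boundary; for compact `K` this makes `f`
a smooth embedding of `K`. -/
structure IsSmoothEmbeddingOn (f : V → W) (K : Set V) : Prop where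
  exists_contDiffOn : ∃ U, IsOpen U ∧ K ⊆ U ∧ ContDiffOn ℝ ∞ f U
  injOn : InjOn f K
  injective_fderiv : ∀ x ∈ K, Injective (fderiv ℝ f x)

namespace IsSmoothEmbeddingOn

variable {f : V → W} {K : Set V}

lemma contDiffAt (hf : IsSmoothEmbeddingOn f K) {x : V} (hx : x ∈ K) : ContDiffAt ℝ ∞ f x := by
  obtain ⟨U, hU, hKU, hfU⟩ := hf.exists_contDiffOn
  exact hfU.contDiffAt (hU.mem_nhds (hKU hx))

lemma continuousOn (hf : IsSmoothEmbeddingOn f K) : ContinuousOn f K := fun _ hx =>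
  (hf.contDiffAt hx).continuousAt.continuousWithinAt

lemma differentiableAt (hf : IsSmoothEmbeddingOn f K) {x : V} (hx : x ∈ K) :
    DifferentiableAt ℝ f x :=
  (hf.contDiffAt hx).differentiableAt (by simp)

lemma comp {g : W → X} {L : Set W} (hg : IsSmoothEmbeddingOn g L) (hf : IsSmoothEmbeddingOn f K)
    (hKL : MapsTo f K L) : IsSmoothEmbeddingOn (g ∘ f) K where
  exists_contDiffOn := by
    obtain ⟨U, hU, hKU, hfU⟩ := hf.exists_contDiffOn
    obtain ⟨U', hU', hLU', hgU'⟩ := hg.exists_contDiffOn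
    exact ⟨U ∩ f ⁻¹' U', hfU.continuousOn.isOpen_inter_preimage hU hU',
      fun x hx => ⟨hKU hx, hLU' (hKL hx)⟩,
      hgU'.comp (hfU.mono inter_subset_left) fun x hx => hx.2⟩
  injOn := hg.injOn.comp hf.injOn hKL
  injective_fderiv x hx := by
    rw [fderiv_comp x (hg.differentiableAt (hKL hx)) (hf.differentiableAt hx)]
    exact (hg.injective_fderiv _ (hKL hx)).comp (hf.injective_fderiv x hx)

theorem exists_openPartialHomeomorph [FiniteDimensional ℝ V] [FiniteDimensional ℝ W]
    (hf : IsSmoothEmbeddingOn f K) (hK : IsCompact K)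
    (hdim : Module.finrank ℝ V = Module.finrank ℝ W) :
    ∃ Φ : OpenPartialHomeomorph V W, ⇑Φ = f ∧ K ⊆ Φ.source ∧
      ContDiffOn ℝ ∞ Φ Φ.source ∧ ContDiffOn ℝ ∞ Φ.symm Φ.target := by
  obtain ⟨U, hU, hKU, hfU⟩ := hf.exists_contDiffOn
  have hequiv : ∀ x ∈ K, fderiv ℝ f x ∈ range ((↑) : (V ≃L[ℝ] W) → V →L[ℝ] W) := fun x hx =>
    ⟨(LinearEquiv.ofInjectiveOfFinrankEq _ (hf.injective_fderiv x hx) hdim).toContinuousLinearEquiv,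
      rfl⟩
  obtain ⟨O, hO, hKO, hinj⟩ := hf.injOn.exists_isOpen_superset hK
    (fun x hx => (hf.contDiffAt hx).continuousAt) fun x hx => by
      obtain ⟨L, hL⟩ := hequiv x hx
      have hstrict := (hf.contDiffAt hx).hasStrictFDerivAt (by simp)
      rw [← hL] at hstrict
      exact ⟨_, (hstrict.toOpenPartialHomeomorph f).open_source.mem_nhds
        hstrict.mem_toOpenPartialHomeomorph_source, (hstrict.toOpenPartialHomeomorph f).injOn⟩
  obtain ⟨Φ, hΦ, hsource, hsymm⟩ := exists_openPartialHomeomorph_of_injOn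
    (hO.inter ((hfU.continuousOn_fderiv_of_isOpen hU (by simp)).isOpen_inter_preimage hU
      ContinuousLinearEquiv.isOpen))
    (hfU.mono fun x hx => hx.2.1) (hinj.mono inter_subset_left) fun x hx => hx.2.2
  refine ⟨Φ, hΦ, fun x hx => ?_, ?_, hsymm⟩
  · exact hsource ▸ ⟨hKO hx, hKU hx, hequiv x hx⟩
  · rw [hΦ, hsource]
    exact hfU.mono fun x hx => hx.2.1

end IsSmoothEmbeddingOn

end SmoothEmbeddingOn

section UnitNormal

variable {V : Type*} [NormedAddCommGroup V] [NormedSpace ℝ V]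

lemma inner_fderiv_eq_zero_of_norm_eq_const {E : Type*} [NormedAddCommGroup E]
    [InnerProductSpace ℝ E] {f : V → E} {c : ℝ} (hnorm : ∀ v, ‖f v‖ = c) {u : V}
    (hf : DifferentiableAt ℝ f u) (w : V) : inner ℝ (f u) (fderiv ℝ f u w) = 0 := by
  have hconst := hf.hasFDerivAt.norm_sq
  simp only [hnorm] at hconst
  simpa using DFunLike.congr_fun (hconst.unique (hasFDerivAt_const (c ^ 2) u)) w

lemma linearIndependent_cons_fderiv {E : Type*} [NormedAddCommGroup E]
    [InnerProductSpace ℝ E] {m : ℕ} (b : Module.Basis (Fin m) ℝ V) {x : E} (hx : x ≠ 0)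
    {L : V →L[ℝ] E} (hL : Injective L) (horth : ∀ w, inner ℝ x (L w) = 0) :
    LinearIndependent ℝ (Fin.cons x fun i => L (b i) : Fin (m + 1) → E) := by
  refine linearIndependent_finCons.2
    ⟨b.linearIndependent.map' L.toLinearMap (LinearMap.ker_eq_bot.2 hL), fun hmem => hx ?_⟩
  obtain ⟨w, rfl⟩ : x ∈ LinearMap.range L.toLinearMap :=
    Submodule.span_le.2 (range_subset_iff.2 fun i => LinearMap.mem_range_self _ (b i)) hmem
  exact inner_self_eq_zero.1 (horth w)

/-- `n` is a smooth field of unit vectors along `f : V → E` over `U`, orthogonal both to the image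
of `f` and to its position vectors: a unit normal field of `f` inside a sphere centred at `0`. -/
structure IsUnitNormalOn {E : Type*} [NormedAddCommGroup E] [InnerProductSpace ℝ E]
    (f n : V → E) (U : Set V) : Prop where
  contDiffOn : ContDiffOn ℝ ∞ n U
  norm_eq_one : ∀ u ∈ U, ‖n u‖ = 1
  inner_eq_zero : ∀ u ∈ U, inner ℝ (n u) (f u) = 0
  inner_fderiv_eq_zero : ∀ u ∈ U, ∀ w, inner ℝ (n u) (fderiv ℝ f u w) = 0

theorem IsSmoothEmbeddingOn.exists_isUnitNormalOn [FiniteDimensional ℝ V] {m : ℕ}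
    (hV : Module.finrank ℝ V = m) {f : V → EuclideanSpace ℝ (Fin (m + 2))} {K : Set V}
    (hf : IsSmoothEmbeddingOn f K) (hnorm : ∀ u, ‖f u‖ = 1) :
    ∃ U n, IsOpen U ∧ K ⊆ U ∧ ContDiffOn ℝ ∞ f U ∧ IsUnitNormalOn f n U := by
  obtain ⟨U, hU, hKU, hfU⟩ := hf.exists_contDiffOn
  let b := Module.finBasisOfFinrankEq ℝ V hV
  let frame : V → Fin (m + 1) → EuclideanSpace ℝ (Fin (m + 2)) :=
    fun u => Fin.cons (f u) fun i => fderiv ℝ f u (b i)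
  let cross := fun u => euclideanCross (frame u)
  have hframe : ∀ k, ContDiffOn ℝ ∞ (fun u => frame u k) U := by
    refine Fin.cases hfU fun i => ?_
    exact (hfU.fderiv_of_isOpen hU (by simp)).clm_apply contDiffOn_const
  have hcross : ContDiffOn ℝ ∞ cross U := contDiffOn_euclideanCross hframe
  refine ⟨U ∩ cross ⁻¹' {0}ᶜ, fun u => ‖cross u‖⁻¹ • cross u,
    hcross.continuousOn.isOpen_inter_preimage hU isOpen_compl_singleton, fun u hu => ⟨hKU hu, ?_⟩,
    hfU.mono inter_subset_left, ?_, fun u hu => ?_, fun u _ => ?_, fun u _ w => ?_⟩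
  · refine euclideanCross_ne_zero (linearIndependent_cons_fderiv b ?_ (hf.injective_fderiv u hu) ?_)
    · exact norm_ne_zero_iff.1 (by simp [hnorm])
    · exact inner_fderiv_eq_zero_of_norm_eq_const hnorm (hf.differentiableAt hu)
  · have hcross' := hcross.mono (inter_subset_left (t := cross ⁻¹' {0}ᶜ))
    exact ((hcross'.norm ℝ fun u hu => hu.2).inv fun u hu => norm_ne_zero_iff.2 hu.2).smul hcross'
  · exact norm_smul_inv_norm (𝕜 := ℝ) hu.2
  · rw [real_inner_smul_left, mul_eq_zero]
    exact Or.inr (inner_euclideanCross_self (frame u) 0)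
  · have hzero : (innerSL ℝ (cross u)).comp (fderiv ℝ f u) = 0 :=
      ContinuousLinearMap.coe_injective
        (b.ext fun i => inner_euclideanCross_self (frame u) i.succ)
    rw [real_inner_smul_left, mul_eq_zero]
    exact Or.inr (DFunLike.congr_fun hzero w)

end UnitNormal

section TubularMap

variable {V E : Type*} [NormedAddCommGroup E] [InnerProductSpace ℝ E]

/-- The exponential map of the normal bundle of `f`, trivialised by the position vector `f` and
the field `n`: the fibre coordinate `s : ℂ` scales by `exp s.re` and moves along the great circle
through `f u` and `n u` by the angle `s.im`. -/
def tubularMap (f n : V → E) (p : V × ℂ) : E :=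
  (Complex.exp p.2).re • f p.1 + (Complex.exp p.2).im • n p.1

@[simp]
lemma tubularMap_zero (f n : V → E) (u : V) : tubularMap f n (u, 0) = f u := by
  simp [tubularMap]

lemma norm_tubularMap {f n : V → E} {p : V × ℂ} (hf : ‖f p.1‖ = 1) (hn : ‖n p.1‖ = 1)
    (hfn : inner ℝ (n p.1) (f p.1) = 0) : ‖tubularMap f n p‖ = Real.exp p.2.re := by
  rw [← Complex.norm_exp, ← sq_eq_sq₀ (norm_nonneg _) (norm_nonneg _), tubularMap, norm_add_sq_real,
    Complex.sq_norm, Complex.normSq_apply, real_inner_smul_left, real_inner_smul_right,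
    real_inner_comm, hfn]
  simp only [norm_smul, hf, hn, Real.norm_eq_abs, mul_one, sq_abs]
  ring

variable [NormedAddCommGroup V] [NormedSpace ℝ V] {f n : V → E} {U K : Set V}

lemma contDiffOn_tubularMap (hf : ContDiffOn ℝ ∞ f U) (hn : ContDiffOn ℝ ∞ n U) :
    ContDiffOn ℝ ∞ (tubularMap f n) (U ×ˢ univ) := by
  have hexp : ContDiff ℝ ∞ fun p : V × ℂ => Complex.exp p.2 :=
    Complex.contDiff_exp.comp contDiff_snd
  exact ((Complex.reCLM.contDiff.comp hexp).contDiffOn.smul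
    (hf.comp contDiffOn_fst fun p hp => hp.1)).add
    ((Complex.imCLM.contDiff.comp hexp).contDiffOn.smul (hn.comp contDiffOn_fst fun p hp => hp.1))

lemma hasFDerivAt_tubularMap_zero {f' n' : V →L[ℝ] E} {u : V} (hf : HasFDerivAt f f' u)
    (hn : HasFDerivAt n n' u) :
    HasFDerivAt (tubularMap f n) (f'.comp (.fst ℝ V ℂ) +
      (Complex.reCLM.comp (.snd ℝ V ℂ)).smulRight (f u) +
      (Complex.imCLM.comp (.snd ℝ V ℂ)).smulRight (n u)) (u, 0) := by
  have hexp : HasFDerivAt (fun p : V × ℂ => Complex.exp p.2) (.snd ℝ V ℂ) (u, 0) := by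
    refine ((Complex.hasStrictDerivAt_exp (0 : ℂ)).hasDerivAt.hasFDerivAt.restrictScalars ℝ
      |>.comp (u, (0 : ℂ)) hasFDerivAt_snd).congr_fderiv ?_
    ext <;> simp
  refine (((Complex.reCLM.hasFDerivAt.comp _ hexp).smul (hf.comp _ hasFDerivAt_fst)).add
    ((Complex.imCLM.hasFDerivAt.comp _ hexp).smul (hn.comp _ hasFDerivAt_fst))).congr_fderiv ?_
  ext <;> simp

theorem isSmoothEmbeddingOn_tubularMap (hf : IsSmoothEmbeddingOn f K) (hnorm : ∀ u, ‖f u‖ = 1)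
    (hU : IsOpen U) (hKU : K ⊆ U) (hfU : ContDiffOn ℝ ∞ f U) (hn : IsUnitNormalOn f n U) :
    IsSmoothEmbeddingOn (tubularMap f n) (K ×ˢ {0}) where
  exists_contDiffOn := ⟨U ×ˢ univ, hU.prod isOpen_univ, prod_mono hKU (subset_univ _),
    contDiffOn_tubularMap hfU hn.contDiffOn⟩
  injOn := by
    rintro ⟨u, _⟩ ⟨hu, rfl⟩ ⟨v, _⟩ ⟨hv, rfl⟩ huv
    rw [tubularMap_zero, tubularMap_zero] at huv
    exact Prod.ext (hf.injOn hu hv huv) rfl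
  injective_fderiv := by
    rintro ⟨u, _⟩ ⟨hu, rfl⟩
    have hnu := (hn.contDiffOn.contDiffAt (hU.mem_nhds (hKU hu))).differentiableAt (by simp)
    rw [(hasFDerivAt_tubularMap_zero (hf.differentiableAt hu).hasFDerivAt hnu.hasFDerivAt).fderiv,
      injective_iff_map_eq_zero]
    rintro ⟨w, c⟩ hwc
    replace hwc : fderiv ℝ f u w + c.re • f u + c.im • n u = 0 := hwc
    have hfw := inner_fderiv_eq_zero_of_norm_eq_const hnorm (hf.differentiableAt hu) w
    have hnw := hn.inner_fderiv_eq_zero u (hKU hu) w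
    have hnf := hn.inner_eq_zero u (hKU hu)
    have hfn : inner ℝ (f u) (n u) = 0 := real_inner_comm (n u) (f u) ▸ hnf
    have hre : c.re = 0 := by
      simpa [inner_add_right, real_inner_smul_right, hfw, hfn, hnorm]
        using congrArg (inner ℝ (f u)) hwc
    have him : c.im = 0 := by
      simpa [inner_add_right, real_inner_smul_right, hnw, hnf, hn.norm_eq_one u (hKU hu)]
        using congrArg (inner ℝ (n u)) hwc
    have hw : fderiv ℝ f u w = 0 := by simpa [hre, him] using hwc
    exact Prod.ext ((injective_iff_map_eq_zero _).1 (hf.injective_fderiv u hu) w hw)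
      (Complex.ext hre him)

end TubularMap

section SumNormSq

/-- The squared Euclidean norm on the product `E × F`, whose norm instance is the sup norm. -/
def sumNormSq {E F : Type*} [Norm E] [Norm F] (v : E × F) : ℝ := ‖v.1‖ ^ 2 + ‖v.2‖ ^ 2

lemma contDiff_sumNormSq {E F : Type*} [NormedAddCommGroup E] [InnerProductSpace ℝ E]
    [NormedAddCommGroup F] [InnerProductSpace ℝ F] : ContDiff ℝ ∞ (sumNormSq : E × F → ℝ) :=
  (contDiff_fst.norm_sq ℝ).add (contDiff_snd.norm_sq ℝ)

lemma isCompact_setOf_sumNormSq_le {E F : Type*} [NormedAddCommGroup E] [NormedAddCommGroup F]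
    [ProperSpace E] [ProperSpace F] (c : ℝ) : IsCompact {v : E × F | sumNormSq v ≤ c} := by
  have hcont : Continuous (sumNormSq : E × F → ℝ) := by unfold sumNormSq; fun_prop
  refine (isCompact_closedBall (0 : E × F) √c).of_isClosed_subset
    (isClosed_le hcont continuous_const) fun v hv => ?_
  rw [mem_ofPred_eq, sumNormSq] at hv
  rw [mem_closedBall_zero_iff, Prod.norm_def]
  exact max_le (Real.le_sqrt_of_sq_le (by nlinarith [sq_nonneg ‖v.2‖]))
    (Real.le_sqrt_of_sq_le (by nlinarith [sq_nonneg ‖v.1‖]))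

end SumNormSq

section AdaptedChart

lemma exists_closedBall_prod_closedBall_subset {V W : Type*} [NormedAddCommGroup V]
    [NormedSpace ℝ V] [ProperSpace V] [PseudoMetricSpace W] {O : Set (V × W)} (hO : IsOpen O)
    {x : V} {y : W} {r : ℝ} (hr : 0 ≤ r) (hsub : closedBall x r ×ˢ {y} ⊆ O) :
    ∃ R > r, ∃ η > 0, closedBall x R ×ˢ closedBall y η ⊆ O := by
  obtain ⟨A, B, hA, hB, hrA, hyB, hAB⟩ :=
    generalized_tube_lemma (isCompact_closedBall x r) isCompact_singleton hO hsub
  obtain ⟨δ, hδ, hδA⟩ := (isCompact_closedBall x r).exists_cthickening_subset_open hA hrA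
  obtain ⟨η, hη, hηB⟩ := nhds_basis_closedBall.mem_iff.1 (hB.mem_nhds (hyB rfl))
  rw [cthickening_closedBall hδ.le hr] at hδA
  exact ⟨δ + r, by linarith, η, hη, (prod_mono hδA hηB).trans hAB⟩

/-- Regroups the coordinates of `ℝ⁴ = ℂ × ℂ` from (axis-normal plane, axis plane) to (disc, fibre):
`v.1.re` and `v.2.re` are the coordinates of the disc, while `v.2.im` and `v.1.im`, scaled by `ε`,
are the radial and the angular coordinate of `tubularMap`. -/
def discFibreEquiv {ε : ℝ} (hε : ε ≠ 0) : (ℂ × ℂ) ≃L[ℝ] ℂ × ℂ :=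
  LinearEquiv.toContinuousLinearEquiv
    { toFun := fun v => (⟨v.1.re, v.2.re⟩, ⟨ε * v.2.im, ε * v.1.im⟩)
      invFun := fun p => (⟨p.1.re, p.2.im / ε⟩, ⟨p.1.im, p.2.re / ε⟩)
      map_add' := fun v w => by ext <;> apply Complex.ext <;> simp [mul_add]
      map_smul' := fun c v => by ext <;> apply Complex.ext <;> simp [mul_left_comm]
      left_inv := fun v => by ext <;> simp [hε]
      right_inv := fun p => by ext <;> simp [mul_div_cancel₀, hε] }

lemma discFibreEquiv_apply {ε : ℝ} (hε : ε ≠ 0) (v : ℂ × ℂ) :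
    discFibreEquiv hε v = (⟨v.1.re, v.2.re⟩, ⟨ε * v.2.im, ε * v.1.im⟩) :=
  rfl

lemma discFibreEquiv_ofReal {ε : ℝ} (hε : ε ≠ 0) (z : ℂ) :
    discFibreEquiv hε (z.re, z.im) = (z, 0) := by
  ext <;> apply Complex.ext <;> simp [discFibreEquiv_apply]

lemma discFibreEquiv_mem_closedBall_prod {ε R : ℝ} (hε : 0 < ε) (hR : 0 ≤ R) {v : ℂ × ℂ}
    (hv : sumNormSq v ≤ R ^ 2) :
    discFibreEquiv hε.ne' v ∈ closedBall (0 : ℂ) R ×ˢ closedBall (0 : ℂ) (ε * R) := by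
  rw [sumNormSq, Complex.sq_norm, Complex.sq_norm, Complex.normSq_apply, Complex.normSq_apply] at hv
  rw [discFibreEquiv_apply, mem_prod, mem_closedBall_zero_iff, mem_closedBall_zero_iff,
    ← sq_le_sq₀ (norm_nonneg _) hR, ← sq_le_sq₀ (norm_nonneg _) (by positivity), Complex.sq_norm,
    Complex.sq_norm, Complex.normSq_mk, Complex.normSq_mk]
  constructor
  · nlinarith
  · nlinarith [sq_nonneg v.1.re, sq_nonneg v.2.re, sq_nonneg ε]

theorem IsSmoothEmbeddingOn.exists_adapted_chart {f : ℂ → EuclideanSpace ℝ (Fin 4)}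
    (hf : IsSmoothEmbeddingOn f (closedBall 0 1)) (hnorm : ∀ z, ‖f z‖ = 1) :
    ∃ (R ε : ℝ) (Φ : OpenPartialHomeomorph (ℂ × ℂ) (EuclideanSpace ℝ (Fin 4))), 1 < R ∧
      ContDiffOn ℝ ∞ Φ Φ.source ∧ ContDiffOn ℝ ∞ Φ.symm Φ.target ∧
      {v | sumNormSq v ≤ R ^ 2} ⊆ Φ.source ∧ (∀ z : ℂ, Φ (z.re, z.im) = f z) ∧
      ∀ v, sumNormSq v ≤ R ^ 2 → ‖Φ v‖ = Real.exp (ε * v.2.im) := by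
  obtain ⟨U, n, hU, hKU, hfU, hn⟩ :=
    hf.exists_isUnitNormalOn Complex.finrank_real_complex hnorm
  obtain ⟨Φ, hΦ, hsource, hsmooth, hsmooth_symm⟩ :=
    (isSmoothEmbeddingOn_tubularMap hf hnorm hU hKU hfU hn).exists_openPartialHomeomorph
      ((isCompact_closedBall _ _).prod isCompact_singleton) (by simp)
  obtain ⟨R, hR, η, hη, hRη⟩ := exists_closedBall_prod_closedBall_subset
    (Φ.open_source.inter (hU.prod isOpen_univ)) zero_le_one
    (subset_inter hsource (prod_mono hKU (subset_univ _)))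
  have hR0 : 0 < R := one_pos.trans hR
  have hε : 0 < η / R := div_pos hη hR0
  let A := discFibreEquiv hε.ne'
  have hA : ∀ v, sumNormSq v ≤ R ^ 2 → A v ∈ Φ.source ∩ U ×ˢ univ := fun v hv => hRη <| by
    simpa [hR0.ne'] using discFibreEquiv_mem_closedBall_prod hε hR0.le hv
  refine ⟨R, η / R, A.toHomeomorph.transOpenPartialHomeomorph Φ, hR,
    hsmooth.comp A.contDiff.contDiffOn fun v hv => hv,
    A.symm.contDiff.comp_contDiffOn hsmooth_symm, fun v hv => (hA v hv).1, fun z => ?_,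
    fun v hv => ?_⟩
  · calc Φ (A (z.re, z.im)) = tubularMap f n (z, 0) := by rw [hΦ, discFibreEquiv_ofReal]
      _ = f z := tubularMap_zero f n z
  · have hu := (hA v hv).2.1
    calc ‖Φ (A v)‖ = ‖tubularMap f n (A v)‖ := by rw [hΦ]
      _ = _ := norm_tubularMap (hnorm _) (hn.norm_eq_one _ hu) (hn.inner_eq_zero _ hu)

end AdaptedChart

section Flows

/-- The flow moving each point `x` along its `φ`-orbit with the speed `c x`, where `c` is constant
along orbits. -/
def rescaledFlow {X : Type*} [TopologicalSpace X] (φ : Flow ℝ X) {c : X → ℝ} (hc : Continuous c)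
    (hinv : ∀ t x, c (φ t x) = c x) : Flow ℝ X where
  toFun t x := φ (t * c x) x
  cont' := φ.continuous (continuous_fst.mul (hc.comp continuous_snd)) continuous_snd
  map_add' s t x := by rw [hinv, ← φ.map_add, add_mul]
  map_zero' x := by rw [zero_mul, φ.map_zero_apply]

/-- The rotation of the first factor of `ℂ × F` with unit angular speed. -/
def rotationFlow (F : Type*) [TopologicalSpace F] : Flow ℝ (ℂ × F) where
  toFun t v := (Complex.exp (t * Complex.I) * v.1, v.2)
  cont' := by fun_prop
  map_add' s t v := by simp [add_mul, Complex.exp_add, mul_assoc]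
  map_zero' v := by simp

lemma rotationFlow_apply {F : Type*} [TopologicalSpace F] (t : ℝ) (v : ℂ × F) :
    rotationFlow F t v = (Complex.exp (t * Complex.I) * v.1, v.2) :=
  rfl

lemma sumNormSq_rotationFlow {F : Type*} [SeminormedAddGroup F] (t : ℝ) (v : ℂ × F) :
    sumNormSq (rotationFlow F t v) = sumNormSq v := by
  simp [sumNormSq, rotationFlow_apply, Complex.norm_exp_ofReal_mul_I]

theorem exists_flow_halfTurn {F : Type*} [NormedAddCommGroup F] [InnerProductSpace ℝ F] {R : ℝ}
    (hR : 1 < R) :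
    ∃ φ : Flow ℝ (ℂ × F), ContDiff ℝ ∞ (uncurry φ) ∧
      (∀ t v, R ^ 2 < sumNormSq v → φ t v = v) ∧ (∀ t v, sumNormSq (φ t v) = sumNormSq v) ∧
      (∀ t v, (φ t v).2 = v.2) ∧ (∀ t w, φ t (0, w) = (0, w)) ∧
      ∀ v, sumNormSq v ≤ 1 → φ 1 v = (-v.1, v.2) := by
  have hR1 : 0 < R ^ 2 - 1 := by nlinarith
  -- The angular speed is `π` on the unit ball and `0` outside the ball of radius `R`.
  let c : ℂ × F → ℝ := fun v =>
    Real.pi * Real.smoothTransition ((R ^ 2 - sumNormSq v) / (R ^ 2 - 1))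
  have hc : ContDiff ℝ ∞ c := contDiff_const.mul <|
    Real.smoothTransition.contDiff.comp <| (contDiff_const.sub contDiff_sumNormSq).div_const _
  have hinv : ∀ t v, c (rotationFlow F t v) = c v := fun t v => by
    simp only [c, sumNormSq_rotationFlow]
  refine ⟨rescaledFlow (rotationFlow F) hc.continuous hinv, ?_, fun t v hv => ?_,
    fun t v => sumNormSq_rotationFlow _ v, fun _ _ => rfl, fun t w => ?_, fun v hv => ?_⟩
  · have hangle : ContDiff ℝ ∞ fun p : ℝ × ℂ × F => ((p.1 * c p.2 : ℝ) : ℂ) * Complex.I :=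
      (Complex.ofRealCLM.contDiff.comp (contDiff_fst.mul (hc.comp contDiff_snd))).mul contDiff_const
    exact ((Complex.contDiff_exp.comp hangle).mul contDiff_snd.fst).prodMk contDiff_snd.snd
  · have hcv : c v = 0 := by
      simp only [c]
      rw [Real.smoothTransition.zero_of_nonpos
        (div_nonpos_of_nonpos_of_nonneg (by linarith) hR1.le), mul_zero]
    change rotationFlow F (t * c v) v = v
    rw [hcv, mul_zero, Flow.map_zero_apply]
  · exact Prod.ext (mul_zero _) rfl
  · have hcv : c v = Real.pi := by
      simp only [c]
      rw [Real.smoothTransition.one_of_one_le ((one_le_div hR1).2 (by linarith)), mul_one]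
    change rotationFlow F (1 * c v) v = (-v.1, v.2)
    simp [hcv, rotationFlow_apply, Complex.exp_pi_mul_I]

section Transport

variable {V W : Type*} [TopologicalSpace V] [TopologicalSpace W]

open Classical in
/-- The map `F` of the source of the chart `Φ`, read in the target of `Φ` and extended by the
identity. -/
def transportMap (Φ : OpenPartialHomeomorph V W) (F : V → V) : W → W :=
  Φ.target.piecewise (Φ ∘ F ∘ Φ.symm) id

variable {Φ : OpenPartialHomeomorph V W} {F : V → V} {C : Set V}

lemma transportMap_apply {v : V} (hv : v ∈ Φ.source) : transportMap Φ F (Φ v) = Φ (F v) := by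
  simp [transportMap, Φ.map_source hv, Φ.left_inv hv]

lemma transportMap_of_notMem_target {x : W} (hx : x ∉ Φ.target) : transportMap Φ F x = x := by
  simp [transportMap, hx]

lemma transportMap_of_notMem_image (hF : ∀ v ∉ C, F v = v) {x : W} (hx : x ∉ Φ '' C) :
    transportMap Φ F x = x := by
  by_cases htarget : x ∈ Φ.target
  · rw [← Φ.right_inv htarget] at hx ⊢
    rw [transportMap_apply (Φ.map_target htarget), hF _ fun hmem => hx (mem_image_of_mem Φ hmem)]
  · exact transportMap_of_notMem_target htarget

end Transport

lemma flow_mapsTo_of_subset {V : Type*} [TopologicalSpace V] {φ : Flow ℝ V} {C O : Set V}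
    (hCO : C ⊆ O) (hφC : ∀ t, ∀ v ∉ C, φ t v = v) (t : ℝ) : MapsTo (φ t) O O := by
  intro v hv
  by_contra hout
  have hback : φ (-t) (φ t v) = φ t v := hφC _ _ fun h => hout (hCO h)
  rw [← φ.map_add, neg_add_cancel, φ.map_zero_apply] at hback
  exact hout (hback ▸ hv)

section SmoothTransport

variable {V W : Type*} [NormedAddCommGroup V] [NormedSpace ℝ V] [NormedAddCommGroup W]
  [NormedSpace ℝ W] {Φ : OpenPartialHomeomorph V W} {C : Set V}

lemma contDiff_transportMap {P : Type*} [NormedAddCommGroup P] [NormedSpace ℝ P]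
    (hΦ : ContDiffOn ℝ ∞ Φ Φ.source) (hΦsymm : ContDiffOn ℝ ∞ Φ.symm Φ.target)
    (hC : IsCompact C) (hCΦ : C ⊆ Φ.source) {F : P → V → V} (hF : ContDiff ℝ ∞ (uncurry F))
    (hFC : ∀ t, ∀ v ∉ C, F t v = v) (hmaps : ∀ t, MapsTo (F t) Φ.source Φ.source) :
    ContDiff ℝ ∞ fun p : P × W => transportMap Φ (F p.1) p.2 := by
  refine contDiff_iff_contDiffAt.2 fun ⟨t, x⟩ => ?_
  by_cases hx : x ∈ Φ.target
  · have hnhds : univ ×ˢ Φ.target ∈ 𝓝 (t, x) :=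
      (isOpen_univ.prod Φ.open_target).mem_nhds ⟨trivial, hx⟩
    have hinner : ContDiffOn ℝ ∞ (fun p : P × W => F p.1 (Φ.symm p.2)) (univ ×ˢ Φ.target) :=
      hF.comp_contDiffOn (contDiffOn_fst.prodMk (hΦsymm.comp contDiffOn_snd fun p hp => hp.2))
    refine ((hΦ.comp hinner fun p hp => hmaps _ (Φ.map_target hp.2)).contDiffAt hnhds)
      |>.congr_of_eventuallyEq ?_
    filter_upwards [hnhds] with p hp
    simp [transportMap, hp.2]
  · have hclosed : IsClosed (Φ '' C) :=
      (hC.image_of_continuousOn (hΦ.continuousOn.mono hCΦ)).isClosed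
    have hx' : x ∉ Φ '' C := fun h => hx (Φ.image_source_eq_target ▸ image_mono hCΦ h)
    refine contDiffAt_snd.congr_of_eventuallyEq ?_
    filter_upwards [(isOpen_univ.prod hclosed.isOpen_compl).mem_nhds ⟨mem_univ t, hx'⟩] with p hp
    exact transportMap_of_notMem_image (hFC p.1) hp.2

theorem exists_flow_transport (hΦ : ContDiffOn ℝ ∞ Φ Φ.source)
    (hΦsymm : ContDiffOn ℝ ∞ Φ.symm Φ.target) (hC : IsCompact C) (hCΦ : C ⊆ Φ.source)
    {φ : Flow ℝ V} (hφ : ContDiff ℝ ∞ (uncurry φ)) (hφC : ∀ t, ∀ v ∉ C, φ t v = v) :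
    ∃ ψ : Flow ℝ W, ContDiff ℝ ∞ (uncurry ψ) ∧ (∀ t, ∀ v ∈ Φ.source, ψ t (Φ v) = Φ (φ t v)) ∧
      ∀ t, ∀ x ∉ Φ.target, ψ t x = x := by
  have hmaps := flow_mapsTo_of_subset hCΦ hφC
  have hsmooth := contDiff_transportMap hΦ hΦsymm hC hCΦ hφ hφC hmaps
  refine ⟨⟨fun t => transportMap Φ (φ t), hsmooth.continuous, fun s t x => ?_, fun x => ?_⟩,
    hsmooth, fun t v hv => transportMap_apply hv, fun t x hx => transportMap_of_notMem_target hx⟩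
  · by_cases hx : x ∈ Φ.target
    · obtain ⟨v, hv, rfl⟩ := Φ.image_source_eq_target.symm ▸ hx
      simp only [transportMap_apply, hv, hmaps t hv, φ.map_add]
    · simp only [transportMap_of_notMem_target hx]
  · by_cases hx : x ∈ Φ.target
    · obtain ⟨v, hv, rfl⟩ := Φ.image_source_eq_target.symm ▸ hx
      rw [transportMap_apply hv, φ.map_zero_apply]
    · exact transportMap_of_notMem_target hx

end SmoothTransport

end Flows

theorem IsSmoothEmbeddingOn.exists_flow_reflecting {f : ℂ → EuclideanSpace ℝ (Fin 4)}
    (hf : IsSmoothEmbeddingOn f (closedBall 0 1)) (hnorm : ∀ z, ‖f z‖ = 1) :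
    ∃ ψ : Flow ℝ (EuclideanSpace ℝ (Fin 4)), ContDiff ℝ ∞ (uncurry ψ) ∧
      (∀ t x, ‖ψ t x‖ = ‖x‖) ∧
      (∀ t, ∀ z ∈ closedBall (0 : ℂ) 1, z.re = 0 → ψ t (f z) = f z) ∧
      ∀ z ∈ closedBall (0 : ℂ) 1, ψ 1 (f z) = f (-conj z) := by
  obtain ⟨R, ε, Φ, hR, hΦ, hΦsymm, hsource, hΦf, hΦnorm⟩ := hf.exists_adapted_chart hnorm
  obtain ⟨φ, hφ, hφid, hφQ, hφsnd, hφaxis, hφturn⟩ := exists_flow_halfTurn (F := ℂ) hR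
  have hφout : ∀ t, ∀ v ∉ {v : ℂ × ℂ | sumNormSq v ≤ R ^ 2}, φ t v = v := fun t v hv =>
    hφid t v (not_le.1 hv)
  obtain ⟨ψ, hψ, hψΦ, hψid⟩ := exists_flow_transport hΦ hΦsymm
    (isCompact_setOf_sumNormSq_le (R ^ 2)) hsource hφ hφout
  have hsum : ∀ z ∈ closedBall (0 : ℂ) 1, sumNormSq ((z.re, z.im) : ℂ × ℂ) ≤ 1 := fun z hz => by
    rw [mem_closedBall_zero_iff, ← sq_le_one_iff₀ (norm_nonneg z), Complex.sq_norm,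
      Complex.normSq_apply] at hz
    simpa [sumNormSq, ← sq] using hz
  have hmem : ∀ z ∈ closedBall (0 : ℂ) 1, ((z.re, z.im) : ℂ × ℂ) ∈ Φ.source := fun z hz =>
    hsource ((hsum z hz).trans (by nlinarith))
  refine ⟨ψ, hψ, fun t x => ?_, fun t z hz hre => ?_, fun z hz => ?_⟩
  · by_cases hx : x ∈ Φ.target
    · obtain ⟨v, hv, rfl⟩ := Φ.image_source_eq_target.symm ▸ hx
      rw [hψΦ t v hv]
      rcases le_or_gt (sumNormSq v) (R ^ 2) with hvR | hvR
      · rw [hΦnorm _ ((hφQ t v).trans_le hvR), hΦnorm v hvR, hφsnd]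
      · rw [hφid t v hvR]
    · rw [hψid t x hx]
  · rw [← hΦf z, hψΦ t _ (hmem z hz), hre, Complex.ofReal_zero, hφaxis]
  · rw [← hΦf z, hψΦ 1 _ (hmem z hz), hφturn _ (hsum z hz), ← hΦf (-conj z)]
    simp

section Mobius

/-- The automorphism of the unit disc mapping `0` to `a`, for `‖a‖ < 1`. -/
def discMobius (a z : ℂ) : ℂ := (z + a) / (1 + conj a * z)

variable {a z : ℂ}

lemma one_add_conj_mul_ne_zero (ha : ‖a‖ < 1) (hz : ‖z‖ ≤ 1) : 1 + conj a * z ≠ 0 := by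
  intro h
  have hnorm : ‖conj a * z‖ = 1 := by rw [eq_neg_of_add_eq_zero_right h, norm_neg, norm_one]
  rw [norm_mul, RCLike.norm_conj] at hnorm
  nlinarith [norm_nonneg a]

lemma normSq_one_add_conj_mul_sub_normSq_add (a z : ℂ) :
    Complex.normSq (1 + conj a * z) - Complex.normSq (z + a) =
      (1 - Complex.normSq a) * (1 - Complex.normSq z) := by
  simp only [Complex.normSq_apply, Complex.add_re, Complex.add_im, Complex.mul_re, Complex.mul_im,
    Complex.conj_re, Complex.conj_im, Complex.one_re, Complex.one_im]
  ring

lemma norm_discMobius_le_one (ha : ‖a‖ < 1) (hz : ‖z‖ ≤ 1) : ‖discMobius a z‖ ≤ 1 := by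
  have hdiff := normSq_one_add_conj_mul_sub_normSq_add a z
  simp only [← Complex.sq_norm] at hdiff
  rw [discMobius, norm_div, div_le_one (norm_pos_iff.2 (one_add_conj_mul_ne_zero ha hz)),
    ← sq_le_sq₀ (norm_nonneg _) (norm_nonneg _), ← sub_nonneg, hdiff]
  exact mul_nonneg (sub_nonneg.2 (pow_le_one₀ (norm_nonneg a) ha.le))
    (sub_nonneg.2 (pow_le_one₀ (norm_nonneg z) hz))

lemma norm_discMobius_eq_one (ha : ‖a‖ < 1) (hz : ‖z‖ = 1) : ‖discMobius a z‖ = 1 := by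
  have hdiff := normSq_one_add_conj_mul_sub_normSq_add a z
  simp only [← Complex.sq_norm, hz, one_pow, sub_self, mul_zero] at hdiff
  rw [discMobius, norm_div,
    div_eq_one_iff_eq (norm_ne_zero_iff.2 (one_add_conj_mul_ne_zero ha hz.le)),
    ← sq_eq_sq₀ (norm_nonneg _) (norm_nonneg _), ← sub_eq_zero, ← neg_sub, hdiff, neg_zero]

lemma discMobius_neg_discMobius (ha : ‖a‖ < 1) (hz : ‖z‖ ≤ 1) :
    discMobius (-a) (discMobius a z) = z := by
  have hw0 := one_add_conj_mul_ne_zero (a := -a) (by simpa) (norm_discMobius_le_one ha hz)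
  have hmul : discMobius a z * (1 + conj a * z) = z + a :=
    div_mul_cancel₀ _ (one_add_conj_mul_ne_zero ha hz)
  rw [discMobius, div_eq_iff hw0, map_neg]
  linear_combination hmul

lemma image_discMobius_sphere (ha : ‖a‖ < 1) :
    discMobius a '' sphere 0 1 = sphere 0 1 := by
  refine (image_subset_iff.2 fun z hz => ?_).antisymm fun z hz => ?_
  all_goals rw [mem_sphere_zero_iff_norm] at hz
  · exact mem_sphere_zero_iff_norm.2 (norm_discMobius_eq_one ha hz)
  · have ha' : ‖-a‖ < 1 := by rwa [norm_neg]
    refine ⟨discMobius (-a) z, mem_sphere_zero_iff_norm.2 (norm_discMobius_eq_one ha' hz), ?_⟩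
    simpa using discMobius_neg_discMobius ha' hz.le

lemma hasDerivAt_discMobius (h : 1 + conj a * z ≠ 0) :
    HasDerivAt (discMobius a) ((1 - conj a * a) / (1 + conj a * z) ^ 2) z := by
  refine (((hasDerivAt_id' z).add_const a).div
    (((hasDerivAt_id' z).const_mul (conj a)).const_add 1) h).congr_deriv ?_
  ring

lemma isSmoothEmbeddingOn_of_deriv_ne_zero {g : ℂ → ℂ} {K U : Set ℂ} (hU : IsOpen U) (hKU : K ⊆ U)
    (hg : DifferentiableOn ℂ g U) (hinj : InjOn g K) (hderiv : ∀ z ∈ K, deriv g z ≠ 0) :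
    IsSmoothEmbeddingOn g K where
  exists_contDiffOn := ⟨U, hU, hKU, (hg.contDiffOn hU).restrict_scalars ℝ⟩
  injOn := hinj
  injective_fderiv z hz := by
    have hgz := (hg.differentiableAt (hU.mem_nhds (hKU hz))).hasDerivAt.hasFDerivAt
    rw [(hgz.restrictScalars ℝ).fderiv]
    exact fun v w hvw => mul_right_cancel₀ (hderiv z hz) hvw

lemma isSmoothEmbeddingOn_discMobius (ha : ‖a‖ < 1) :
    IsSmoothEmbeddingOn (discMobius a) (closedBall 0 1) := by
  have hball : ∀ z ∈ closedBall (0 : ℂ) 1, 1 + conj a * z ≠ 0 := fun z hz =>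
    one_add_conj_mul_ne_zero ha (mem_closedBall_zero_iff.1 hz)
  refine isSmoothEmbeddingOn_of_deriv_ne_zero
    (isOpen_ne_fun (by fun_prop) continuous_const) hball
    (fun z hz => (hasDerivAt_discMobius hz).differentiableAt.differentiableWithinAt)
    (LeftInvOn.injOn fun z hz => discMobius_neg_discMobius ha (mem_closedBall_zero_iff.1 hz))
    fun z hz => ?_
  rw [(hasDerivAt_discMobius (hball z hz)).deriv]
  refine div_ne_zero ?_ (pow_ne_zero 2 (hball z hz))
  rw [sub_ne_zero, ← Complex.normSq_eq_conj_mul_self, ← Complex.sq_norm]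
  exact_mod_cast (pow_lt_one₀ (norm_nonneg a) ha two_ne_zero).ne'

lemma exists_discMobius_eq {w : ℂ} (hw : ‖w‖ = 1) (him : 0 < w.im) :
    ∃ a, ‖a‖ < 1 ∧ discMobius a Complex.I = w ∧ discMobius a (-Complex.I) = conj w := by
  have hw2 : w.re ^ 2 + w.im ^ 2 = 1 := by
    rw [← one_pow 2, ← hw, Complex.sq_norm, Complex.normSq_apply]; ring
  -- `x` is the stereographic projection of `w` from `-i`.
  obtain ⟨x, hx⟩ : ∃ x : ℝ, x * (1 + w.im) = w.re := ⟨w.re / (1 + w.im), by field_simp⟩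
  have hx' : w.re * x = 1 - w.im :=
    mul_right_cancel₀ (by positivity : 1 + w.im ≠ 0) (by linear_combination w.re * hx + hw2)
  have hx1 : ‖(x : ℂ)‖ < 1 := by
    rw [Complex.norm_real, Real.norm_eq_abs, ← sq_lt_one_iff_abs_lt_one]
    have hx2 : x ^ 2 * (1 + w.im) = 1 - w.im := by linear_combination x * hx + hx'
    by_contra! hge
    nlinarith
  refine ⟨x, hx1, ?_, ?_⟩
  · rw [discMobius, div_eq_iff (one_add_conj_mul_ne_zero hx1 (by simp))]
    exact Complex.ext (by simp; linarith) (by simp; linarith)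
  · rw [discMobius, div_eq_iff (one_add_conj_mul_ne_zero hx1 (by simp))]
    exact Complex.ext (by simp; linarith) (by simp; linarith)

lemma exists_circle_mul_eq {p q : ℂ} (hp : ‖p‖ = 1) (hq : ‖q‖ = 1) (hpq : p ≠ q) :
    ∃ (κ : Circle) (w : ℂ), ‖w‖ = 1 ∧ 0 < w.im ∧ κ * w = p ∧ κ * conj w = q := by
  -- For a square root `κ` of `p * q`, the points `conj κ * p` and `conj κ * q` are conjugate.
  obtain ⟨κ, hκ⟩ := IsAlgClosed.exists_pow_nat_eq (p * q) two_pos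
  have hκ1 : ‖κ‖ = 1 := by
    rw [← pow_eq_one_iff_of_nonneg (norm_nonneg κ) two_ne_zero, ← norm_pow, hκ, norm_mul, hp, hq,
      one_mul]
  have hκinv : κ * conj κ = 1 := by rw [Complex.mul_conj, ← Complex.sq_norm, hκ1]; norm_num
  have hpinv : p * conj p = 1 := by rw [Complex.mul_conj, ← Complex.sq_norm, hp]; norm_num
  have hw1 : ‖conj κ * p‖ = 1 := by rw [norm_mul, RCLike.norm_conj, hκ1, hp, one_mul]
  have hwp : κ * (conj κ * p) = p := by rw [← mul_assoc, hκinv, one_mul]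
  have hwq : κ * conj (conj κ * p) = q := by
    rw [map_mul, Complex.conj_conj]
    linear_combination conj p * hκ + q * hpinv
  have him : (conj κ * p).im ≠ 0 := fun h => hpq <| by
    rw [← hwp, ← hwq, Complex.conj_eq_iff_im.2 h]
  rcases him.lt_or_gt with hneg | hpos
  · refine ⟨⟨-κ, ?_⟩, -(conj κ * p), by rwa [norm_neg], by simpa using hneg, ?_, ?_⟩
    · simpa [Submonoid.unitSphere] using hκ1
    · exact (neg_mul_neg _ _).trans hwp
    · rw [map_neg]
      exact (neg_mul_neg _ _).trans hwq
  · exact ⟨⟨κ, mem_sphere_zero_iff_norm.2 hκ1⟩, conj κ * p, hw1, hpos, hwp, hwq⟩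

lemma exists_linearIsometryEquiv_comp_discMobius_eq {p q : EuclideanSpace ℝ (Fin 2)} (hp : ‖p‖ = 1)
    (hq : ‖q‖ = 1) (hpq : p ≠ q) :
    ∃ (L : ℂ ≃ₗᵢ[ℝ] EuclideanSpace ℝ (Fin 2)) (a : ℂ), ‖a‖ < 1 ∧
      L (discMobius a Complex.I) = p ∧ L (discMobius a (-Complex.I)) = q := by
  let e := Complex.orthonormalBasisOneI.repr
  obtain ⟨κ, w, hw, him, hwp, hwq⟩ := exists_circle_mul_eq ((e.symm.norm_map p).trans hp)
    ((e.symm.norm_map q).trans hq) (e.symm.injective.ne hpq)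
  obtain ⟨a, ha, haI, haI'⟩ := exists_discMobius_eq hw him
  refine ⟨(rotation κ).trans e, a, ha, ?_, ?_⟩
  · rw [haI, LinearIsometryEquiv.trans_apply, rotation_apply, hwp, e.apply_symm_apply]
  · rw [haI', LinearIsometryEquiv.trans_apply, rotation_apply, hwq, e.apply_symm_apply]

end Mobius

section Arcs

lemma eq_of_isPreconnected_of_union_eq {X : Type*} [TopologicalSpace X] {P N A A' e : Set X}
    (hP : IsClosed P) (hN : IsClosed N) (hA : IsPreconnected A) (hA' : IsPreconnected A')
    (he : P ∩ N = e) (hAe : Disjoint A e) (hAe' : Disjoint A' e) (hPN : ¬P ⊆ N) (hNP : ¬N ⊆ P)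
    (hunion : P ∪ N = (A ∪ e) ∪ (A' ∪ e)) :
    (A ∪ e = P ∧ A' ∪ e = N) ∨ (A ∪ e = N ∧ A' ∪ e = P) := by
  subst he
  have hside : ∀ B, IsPreconnected B → Disjoint B (P ∩ N) → B ⊆ P ∪ N → B ⊆ P ∨ B ⊆ N :=
    fun B hB hdisj hsub => isPreconnected_iff_subset_of_disjoint_closed.1 hB P N hP hN hsub
      (disjoint_iff_inter_eq_empty.1 hdisj)
  rcases hside A hA hAe (by grind) with h | h <;> rcases hside A' hA' hAe' (by grind) with h' | h'
  · exact absurd (by grind) hNP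
  · exact Or.inl (by grind)
  · exact Or.inr (by grind)
  · exact absurd (by grind) hPN

/-- The closed right half of the unit circle. -/
def rightHalfCircle : Set ℂ := {z ∈ sphere 0 1 | 0 ≤ z.re}

/-- The closed left half of the unit circle. -/
def leftHalfCircle : Set ℂ := {z ∈ sphere 0 1 | z.re ≤ 0}

lemma rightHalfCircle_subset_sphere : rightHalfCircle ⊆ sphere 0 1 := sep_subset _ _

lemma leftHalfCircle_subset_sphere : leftHalfCircle ⊆ sphere 0 1 := sep_subset _ _

lemma rightHalfCircle_union_leftHalfCircle : rightHalfCircle ∪ leftHalfCircle = sphere 0 1 := by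
  ext z
  have := le_total 0 z.re
  simp only [rightHalfCircle, leftHalfCircle, mem_union, mem_ofPred_eq]
  tauto

lemma rightHalfCircle_inter_leftHalfCircle :
    rightHalfCircle ∩ leftHalfCircle = {Complex.I, -Complex.I} := by
  ext z
  simp only [rightHalfCircle, leftHalfCircle, mem_inter_iff, mem_ofPred_eq, mem_insert_iff,
    mem_singleton_iff, mem_sphere_zero_iff_norm]
  constructor
  · rintro ⟨⟨hz, hre⟩, -, hre'⟩
    have hre0 : z.re = 0 := hre'.antisymm hre
    rw [← Complex.abs_im_eq_norm.2 hre0, abs_eq zero_le_one] at hz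
    exact hz.imp (fun h => Complex.ext hre0 h) fun h =>
      Complex.ext (by simpa using hre0) (by simpa using h)
  · rintro (rfl | rfl) <;> simp

lemma image_neg_conj_rightHalfCircle :
    (fun z => -conj z) '' rightHalfCircle = leftHalfCircle := by
  ext z
  constructor
  · rintro ⟨w, ⟨hw, hre⟩, rfl⟩
    exact ⟨by simpa using hw, by simpa using hre⟩
  · rintro ⟨hz, hre⟩
    exact ⟨-conj z, ⟨by simpa using hz, by simpa using hre⟩, by simp⟩

lemma image_neg_conj_leftHalfCircle :
    (fun z => -conj z) '' leftHalfCircle = rightHalfCircle := by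
  rw [← image_neg_conj_rightHalfCircle, image_image]
  simp

lemma isCompact_rightHalfCircle : IsCompact rightHalfCircle :=
  (isCompact_sphere 0 1).inter_right (isClosed_le continuous_const Complex.continuous_re)

lemma isCompact_leftHalfCircle : IsCompact leftHalfCircle :=
  (isCompact_sphere 0 1).inter_right (isClosed_le Complex.continuous_re continuous_const)

namespace EmbeddedArc

lemma interior_union_endpoints (a : EmbeddedArc) :
    a.interior ∪ {a.emb 0, a.emb 1} = a.carrier := by
  rw [interior, carrier, ← image_pair, ← image_union, Ioo_union_both zero_le_one]

lemma disjoint_interior_endpoints (a : EmbeddedArc) :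
    Disjoint a.interior {a.emb 0, a.emb 1} := by
  rw [interior, ← image_pair]
  refine Disjoint.image ?_ a.inj Ioo_subset_Icc_self (by simp [pair_subset_iff])
  simp

lemma isPreconnected_interior (a : EmbeddedArc) : IsPreconnected a.interior :=
  isPreconnected_Ioo.image _ a.smooth.continuous.continuousOn

end EmbeddedArc

theorem carriers_eq_image_halfCircles {f : ℂ → S3} (hcont : ContinuousOn f (sphere 0 1))
    (hinj : InjOn f (sphere 0 1)) {a a' : EmbeddedArc}
    (hends : ({a.emb 0, a.emb 1} : Set S3) = {a'.emb 0, a'.emb 1})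
    (hfI : f Complex.I = a.emb 0) (hfI' : f (-Complex.I) = a.emb 1)
    (hcircle : f '' sphere 0 1 = a.carrier ∪ a'.carrier) :
    (a.carrier = f '' rightHalfCircle ∧ a'.carrier = f '' leftHalfCircle) ∨
      (a.carrier = f '' leftHalfCircle ∧ a'.carrier = f '' rightHalfCircle) := by
  have hright := rightHalfCircle_subset_sphere
  have hleft := leftHalfCircle_subset_sphere
  have hinter : f '' rightHalfCircle ∩ f '' leftHalfCircle = {a.emb 0, a.emb 1} := by
    rw [← hinj.image_inter hright hleft, rightHalfCircle_inter_leftHalfCircle, image_pair,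
      hfI, hfI']
  have hunion : f '' rightHalfCircle ∪ f '' leftHalfCircle = a.carrier ∪ a'.carrier := by
    rw [← image_union, rightHalfCircle_union_leftHalfCircle, hcircle]
  rw [← a.interior_union_endpoints, ← a'.interior_union_endpoints, ← hends] at hunion ⊢
  refine eq_of_isPreconnected_of_union_eq
    (isCompact_rightHalfCircle.image_of_continuousOn (hcont.mono hright)).isClosed
    (isCompact_leftHalfCircle.image_of_continuousOn (hcont.mono hleft)).isClosed
    a.isPreconnected_interior a'.isPreconnected_interior hinter
    a.disjoint_interior_endpoints (hends ▸ a'.disjoint_interior_endpoints) ?_ ?_ hunion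
  · rw [hinj.image_subset_image_iff hright hleft]
    intro h
    have hre : (1 : ℝ) ≤ 0 := (h (show (1 : ℂ) ∈ rightHalfCircle by simp [rightHalfCircle])).2
    norm_num at hre
  · rw [hinj.image_subset_image_iff hleft hright]
    intro h
    have hre : (0 : ℝ) ≤ -1 := (h (show (-1 : ℂ) ∈ leftHalfCircle by simp [leftHalfCircle])).2
    norm_num at hre

end Arcs

section Disc

lemma isSmoothEmbeddingOn_linearIsometryEquiv {V W : Type*} [NormedAddCommGroup V]
    [NormedSpace ℝ V] [NormedAddCommGroup W] [NormedSpace ℝ W] (L : V ≃ₗᵢ[ℝ] W) (K : Set V) :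
    IsSmoothEmbeddingOn L K where
  exists_contDiffOn := ⟨univ, isOpen_univ, subset_univ K, L.contDiff.contDiffOn⟩
  injOn := L.injective.injOn
  injective_fderiv x _ := by
    rw [show fderiv ℝ L x = L.toContinuousLinearEquiv from
      L.toContinuousLinearEquiv.hasFDerivAt.fderiv]
    exact L.injective

instance : Fact (Module.finrank ℝ (EuclideanSpace ℝ (Fin 4)) = 3 + 1) := ⟨by simp⟩

namespace EmbeddedDisc

lemma isSmoothEmbeddingOn_coe (D : EmbeddedDisc) :
    IsSmoothEmbeddingOn (fun x => (D.emb x : EuclideanSpace ℝ (Fin 4))) (closedBall 0 1) where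
  exists_contDiffOn := ⟨univ, isOpen_univ, subset_univ _,
    (contMDiff_iff_contDiff.1 (contMDiff_coe_sphere.comp D.smooth)).contDiffOn⟩
  injOn := Subtype.val_injective.comp_injOn (injOn_iff_injective.2 D.isEmbedding.injective)
  injective_fderiv x hx := by
    have hcomp : mfderiv 𝓘(ℝ, EuclideanSpace ℝ (Fin 2)) 𝓘(ℝ, EuclideanSpace ℝ (Fin 4))
        (fun x => (D.emb x : EuclideanSpace ℝ (Fin 4))) x =
        (mfderiv (𝓡 3) 𝓘(ℝ, EuclideanSpace ℝ (Fin 4)) ((↑) : S3 → EuclideanSpace ℝ (Fin 4))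
          (D.emb x)).comp (mfderiv 𝓘(ℝ, EuclideanSpace ℝ (Fin 2)) (𝓡 3) D.emb x) :=
      mfderiv_comp x ((contMDiff_coe_sphere (m := ∞)).mdifferentiableAt (by simp))
        (D.smooth.mdifferentiableAt (by simp))
    rw [← mfderiv_eq_fderiv, hcomp]
    exact (injective_mvfderiv_subtypeVal_sphere (D.emb x)).comp (D.immersion x hx)

theorem exists_parametrization (D : EmbeddedDisc) {x y : S3} (hx : x ∈ D.bdry) (hy : y ∈ D.bdry)
    (hxy : x ≠ y) :
    ∃ f : ℂ → S3,
      IsSmoothEmbeddingOn (fun z => (f z : EuclideanSpace ℝ (Fin 4))) (closedBall 0 1) ∧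
      f '' sphere 0 1 = D.bdry ∧ f Complex.I = x ∧ f (-Complex.I) = y := by
  obtain ⟨p, hp, rfl⟩ := hx
  obtain ⟨q, hq, rfl⟩ := hy
  obtain ⟨L, a, ha, haI, haI'⟩ := exists_linearIsometryEquiv_comp_discMobius_eq
    (mem_sphere_zero_iff_norm.1 hp) (mem_sphere_zero_iff_norm.1 hq) (ne_of_apply_ne D.emb hxy)
  have hL := (isSmoothEmbeddingOn_linearIsometryEquiv L (closedBall 0 1)).comp
    (isSmoothEmbeddingOn_discMobius ha) fun z hz =>
      mem_closedBall_zero_iff.2 (norm_discMobius_le_one ha (mem_closedBall_zero_iff.1 hz))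
  refine ⟨fun z => D.emb (L (discMobius a z)), D.isSmoothEmbeddingOn_coe.comp hL fun z hz => ?_, ?_,
    congrArg D.emb haI, congrArg D.emb haI'⟩
  · rw [mem_closedBall_zero_iff]
    refine (L.norm_map _).trans_le ?_
    exact norm_discMobius_le_one ha (mem_closedBall_zero_iff.1 hz)
  · rw [← image_image D.emb, ← image_image L, image_discMobius_sphere ha, L.image_sphere, map_zero,
      bdry]

end EmbeddedDisc

end Disc

section Isotopy

lemma mem_sphere_of_norm_apply_eq {E F : Type*} [SeminormedAddCommGroup E]
    [SeminormedAddCommGroup F] {g : E → F} (hg : ∀ x, ‖g x‖ = ‖x‖) {r : ℝ} (x : sphere (0 : E) r) :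
    g x ∈ sphere 0 r := by
  rw [mem_sphere_zero_iff_norm, hg, norm_eq_of_mem_sphere]

/-- The ambient isotopy of `S³` induced by a smooth norm-preserving flow of `ℝ⁴`, run for unit
time. -/
def AmbientIsotopy.ofFlow (ψ : Flow ℝ (EuclideanSpace ℝ (Fin 4))) (hψ : ContDiff ℝ ∞ (uncurry ψ))
    (hnorm : ∀ t x, ‖ψ t x‖ = ‖x‖) : AmbientIsotopy where
  toFun lam x := ⟨ψ lam x, mem_sphere_of_norm_apply_eq (hnorm lam) x⟩
  smooth := by
    have hcoe : ContMDiff ((𝓡∂ 1).prod (𝓡 3)) 𝓘(ℝ, ℝ × EuclideanSpace ℝ (Fin 4)) ∞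
        fun p : Icc (0 : ℝ) 1 × S3 => ((p.1 : ℝ), (p.2 : EuclideanSpace ℝ (Fin 4))) :=
      (contMDiff_subtypeVal_Icc.comp contMDiff_fst).prodMk_space
        (contMDiff_coe_sphere.comp contMDiff_snd)
    exact (hψ.contMDiff.comp hcoe).codRestrict_sphere fun p =>
      mem_sphere_of_norm_apply_eq (hnorm p.1) p.2
  init x := Subtype.ext (ψ.map_zero_apply x)
  diffeo lam := by
    have hslice (t : ℝ) :
        ContMDiff (𝓡 3) (𝓡 3) ∞
          fun x : S3 => (⟨ψ t x, mem_sphere_of_norm_apply_eq (hnorm t) x⟩ : S3) :=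
      ((hψ.comp (contDiff_prodMk_right t)).contMDiff.comp contMDiff_coe_sphere).codRestrict_sphere
        _
    exact ⟨{
      toFun := _
      invFun := _
      left_inv := fun x => Subtype.ext <| by simp [← ψ.map_add]
      right_inv := fun x => Subtype.ext <| by simp [← ψ.map_add]
      contMDiff_toFun := hslice lam
      contMDiff_invFun := hslice (-lam) }, fun x => rfl⟩

theorem IsSmoothEmbeddingOn.exists_ambientIsotopy_reflecting {f : ℂ → S3}
    (hf : IsSmoothEmbeddingOn (fun z => (f z : EuclideanSpace ℝ (Fin 4))) (closedBall 0 1)) :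
    ∃ h : AmbientIsotopy,
      (∀ lam, ∀ z ∈ closedBall (0 : ℂ) 1, z.re = 0 → h.toFun lam (f z) = f z) ∧
      ∀ z ∈ closedBall (0 : ℂ) 1, h.toFun 1 (f z) = f (-conj z) := by
  obtain ⟨ψ, hψ, hnorm, hfix, hreflect⟩ :=
    hf.exists_flow_reflecting fun z => norm_eq_of_mem_sphere (f z)
  exact ⟨.ofFlow ψ hψ hnorm, fun lam z hz hre => Subtype.ext (hfix lam z hz hre),
    fun z hz => Subtype.ext (hreflect z hz)⟩

end Isotopy

/-- Let `α` and `α'` be smoothly embedded arcs in `S³` with the same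
pair of distinct endpoints and disjoint interiors, such that the circle `α ∪ α'` is
unknotted, i.e. it bounds a smoothly embedded disc in `S³`. Then there is a smooth
ambient isotopy of `S³` fixing the two endpoints throughout and sending `α` to `α'`. -/
theorem arcs_bounding_disc_ambient_isotopic_rel_endpoints
    (a a' : EmbeddedArc)
    (hne : a.emb 0 ≠ a.emb 1)
    (hends : ({a.emb 0, a.emb 1} : Set S3) = {a'.emb 0, a'.emb 1})
    (hdisj : a.interior ∩ a'.interior = ∅)
    (hunknot : ∃ D : EmbeddedDisc, D.bdry = a.carrier ∪ a'.carrier) :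
    ∃ h : AmbientIsotopy,
      (∀ lam : Set.Icc (0:ℝ) 1,
        h.toFun lam (a.emb 0) = a.emb 0 ∧ h.toFun lam (a.emb 1) = a.emb 1) ∧
      h.Sends a.carrier a'.carrier := by
  obtain ⟨D, hD⟩ := hunknot
  obtain ⟨f, hf, hcircle, hfI, hfI'⟩ := D.exists_parametrization
    (hD ▸ .inl ⟨0, by simp, rfl⟩) (hD ▸ .inl ⟨1, by simp, rfl⟩) hne
  obtain ⟨h, hfix, hreflect⟩ := hf.exists_ambientIsotopy_reflecting
  refine ⟨h, fun lam => ⟨?_, ?_⟩, ?_⟩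
  · rw [← hfI]
    exact hfix lam _ (by simp) (by simp)
  · rw [← hfI']
    exact hfix lam _ (by simp) (by simp)
  have hcont : ContinuousOn f (sphere 0 1) :=
    (IsInducing.subtypeVal.continuousOn_iff.2 hf.continuousOn).mono sphere_subset_closedBall
  have hinj : InjOn f (sphere 0 1) := (InjOn.of_comp hf.injOn).mono sphere_subset_closedBall
  have himage : ∀ H ⊆ sphere (0 : ℂ) 1, h.toFun 1 '' (f '' H) = f '' ((fun z => -conj z) '' H) := by
    intro H hH
    rw [image_image, image_image]
    exact image_congr fun z hz => hreflect z (sphere_subset_closedBall (hH hz))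
  rcases carriers_eq_image_halfCircles hcont hinj hends hfI hfI'
    (hcircle.trans hD) with ⟨ha, ha'⟩ | ⟨ha, ha'⟩
  · rw [AmbientIsotopy.Sends, ha, ha', himage _ rightHalfCircle_subset_sphere,
      image_neg_conj_rightHalfCircle]
  · rw [AmbientIsotopy.Sends, ha, ha', himage _ leftHalfCircle_subset_sphere,
      image_neg_conj_leftHalfCircle]
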